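/- Let q and A be invertible elements of the field M = RatFunc(RatFunc ℚ) as in the context, let m be a natural number, W = 2m+5, and let t ∈ M be arbitrary (t plays the role of the free coefficient a_{[2,2]}). Define a_{[3,1]} = −(t·q² + q^{2m+3}(1+q²+q⁴+q⁶+q⁸) − q^{11+4m}(1+q²)) / ((1−q+q²)(1+q+q²)) and a_{[2,1,1]} = −(1+q² − q^{2+2m}(1+q²+q⁴+q⁶+q⁸) + t·q^{11+4m}) / (q^{9+4m}(1−q+q²)(1+q+q²)). Then the character expansion A^{−W}( q^{W}·S*_{[4]} + a_{[3,1]}·S*_{[3,1]} + t·S*_{[2,2]} + a_{[2,1,1]}·S*_{[2,1,1]} − q^{−W}·S*_{[1,1,1,1]} ) equals the differential expansion 1 + (A²−q²)(A²−q⁴)(A²−q^{−2})(A²−q^{−4})·F_m, where F_m = −Σ_{j=0}^m ([2j+4]_q[j+3]_q[j+1]_q/([3]_q[4]_q))·A^{−2j−8}; in particular the result is independent of t. -/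

import Mathlib

/-- The field `M = RatFunc (RatFunc ℚ)`; `q` and `A` are its two distinguished
invertible elements. -/
noncomputable abbrev Mf : Type := RatFunc (RatFunc ℚ)

/-- The element `q` of `M`. -/
noncomputable def qv : Mf := RatFunc.C RatFunc.X

/-- The element `A` of `M`. -/
noncomputable def Av : Mf := RatFunc.X

/-- `{x} = x − x^{−1}`. -/
noncomputable def br (x : Mf) : Mf := x - x⁻¹

/-- The quantum integer `[n]_q = (q^n − q^{−n})/(q − q^{−1})` inside `M`. -/
noncomputable def qint (n : ℤ) : Mf := (qv ^ n - qv ^ (-n)) / (qv - qv⁻¹)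

/-- `S*_{[4]} = {Aq}{Aq²}{Aq³}/({q²}{q³}{q⁴})`. -/
noncomputable def S4 : Mf :=
  br (Av * qv) * br (Av * qv ^ 2) * br (Av * qv ^ 3) / (br (qv ^ 2) * br (qv ^ 3) * br (qv ^ 4))

/-- `S*_{[3,1]} = {Aq}{Aq²}{Aq^{−1}}/({q}{q²}{q⁴})`. -/
noncomputable def S31 : Mf :=
  br (Av * qv) * br (Av * qv ^ 2) * br (Av * qv⁻¹) / (br qv * br (qv ^ 2) * br (qv ^ 4))

/-- `S*_{[2,2]} = {A}{Aq}{Aq^{−1}}/({q²}{q²}{q³})`. -/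
noncomputable def S22 : Mf :=
  br Av * br (Av * qv) * br (Av * qv⁻¹) / (br (qv ^ 2) * br (qv ^ 2) * br (qv ^ 3))

/-- `S*_{[2,1,1]} = {Aq}{Aq^{−1}}{Aq^{−2}}/({q}{q²}{q⁴})`. -/
noncomputable def S211 : Mf :=
  br (Av * qv) * br (Av * qv⁻¹) * br (Av * qv⁻¹ ^ 2) / (br qv * br (qv ^ 2) * br (qv ^ 4))

/-- `S*_{[1,1,1,1]} = {Aq^{−1}}{Aq^{−2}}{Aq^{−3}}/({q²}{q³}{q⁴})`. -/
noncomputable def S1111 : Mf :=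
  br (Av * qv⁻¹) * br (Av * qv⁻¹ ^ 2) * br (Av * qv⁻¹ ^ 3) /
    (br (qv ^ 2) * br (qv ^ 3) * br (qv ^ 4))

/-- `F_m = −Σ_{j=0}^m ([2j+4]_q[j+3]_q[j+1]_q/([3]_q[4]_q))·A^{−2j−8}`. -/
noncomputable def FmM (m : ℕ) : Mf :=
  -∑ j ∈ Finset.range (m + 1),
    (qint (2 * j + 4) * qint (j + 3) * qint (j + 1) / (qint 3 * qint 4)) *
      Av ^ (-(2 * (j : ℤ)) - 8)

/-!
In the variable `x = A²`, the character expansion is `x ^ (-(m + 4))` times the value at `x` of the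
Lagrange interpolant of `x ^ (m + 4)` at the four nodes `q ^ (±2)`, `q ^ (±4)`. The three-term
relation between brackets turns the combinations of Schur functions multiplying `q ^ (±W)` and
`q ^ (±2W)` into the Lagrange basis polynomials, while `t` multiplies
`S*_{[2,2]} - (S*_{[3,1]} + S*_{[2,1,1]}) / [3]_q = 0`. The interpolation error of `x ^ (m + 4)` is
the nodal polynomial `(x - q²)(x - q⁴)(x - q⁻²)(x - q⁻⁴)` times `∑_{j ≤ m} h_j x ^ (m - j)`, where
the complete homogeneous symmetric polynomial `h_j` of the nodes is the quantum-integer coefficient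
of the differential expansion.
-/

section Interpolation

open Finset Polynomial

variable {F ι : Type*} [Field F] [DecidableEq ι]

/-- The moments `∑ᵢ wᵢ vᵢᵏ` of the barycentric weights `wᵢ`; they are the coefficients of the error
of Lagrange interpolation of powers. For `n + 1` distinct nodes, the moment of order `n + j` is the
complete homogeneous symmetric polynomial `h_j` of the nodes. -/
noncomputable def nodalMoment (s : Finset ι) (v : ι → F) (k : ℕ) : F :=
  ∑ i ∈ s, Lagrange.nodalWeight s v i * v i ^ k

lemma X_sub_C_mul_basis {s : Finset ι} {i : ι} (hi : i ∈ s) (v : ι → F) :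
    (X - C (v i)) * Lagrange.basis s v i = C (Lagrange.nodalWeight s v i) * Lagrange.nodal s v := by
  rw [Lagrange.basis_eq_prod_sub_inv_mul_nodal_div hi, ← Lagrange.nodal_erase_eq_nodal_div hi,
    mul_left_comm, ← Lagrange.nodal_eq_mul_nodal_erase hi]

lemma interpolate_pow_succ (s : Finset ι) (v : ι → F) (k : ℕ) :
    Lagrange.interpolate s v (v ^ (k + 1)) =
      X * Lagrange.interpolate s v (v ^ k) - C (nodalMoment s v k) * Lagrange.nodal s v := by
  simp only [Lagrange.interpolate_apply, nodalMoment, map_sum, mul_sum, sum_mul,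
    ← sum_sub_distrib]
  refine sum_congr rfl fun i hi => ?_
  simp only [Pi.pow_apply, map_mul, pow_succ]
  linear_combination -C (v i ^ k) * X_sub_C_mul_basis hi v

lemma interpolate_pow_of_lt_card {s : Finset ι} {v : ι → F} (hv : Set.InjOn v s) {k : ℕ}
    (hk : k < #s) : Lagrange.interpolate s v (v ^ k) = X ^ k :=
  (Lagrange.eq_interpolate_of_eval_eq _ hv (by simpa using hk) (by simp)).symm

theorem eval_interpolate_pow_div_pow {s : Finset ι} {v : ι → F} (hv : Set.InjOn v s) {n : ℕ}
    (hn : n < #s) {x : F} (hx : x ≠ 0) (m : ℕ) :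
    (Lagrange.interpolate s v (v ^ (n + m))).eval x / x ^ (n + m) =
      1 - (Lagrange.nodal s v).eval x *
        ∑ j ∈ range m, nodalMoment s v (n + j) / x ^ (n + j + 1) := by
  induction m with
  | zero => simp [interpolate_pow_of_lt_card hv hn, hx]
  | succ m ih =>
    have step : (Lagrange.interpolate s v (v ^ (n + m + 1))).eval x / x ^ (n + m + 1) =
        (Lagrange.interpolate s v (v ^ (n + m))).eval x / x ^ (n + m) -
          (Lagrange.nodal s v).eval x * (nodalMoment s v (n + m) / x ^ (n + m + 1)) := by
      rw [interpolate_pow_succ]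
      simp only [eval_sub, eval_mul, eval_X, eval_C]
      field_simp
      ring
    rw [← add_assoc, step, ih, sum_range_succ]
    ring

end Interpolation

section Brace

open Finset Polynomial

variable {K : Type*} [Field K]

/-- The bracket `{x} = x - x⁻¹` in an arbitrary field. -/
def brace (x : K) : K := x - x⁻¹

/-- The quantum integer `[n]_q` in an arbitrary field. -/
def quantumInt (q : K) (n : ℤ) : K := (q ^ n - q ^ (-n)) / (q - q⁻¹)

lemma brace_ne_zero {x : K} (hx : x ≠ 0) (h : x ^ 2 ≠ 1) : brace x ≠ 0 := by
  rw [brace, sub_ne_zero]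
  contrapose! h
  rw [sq, ← mul_inv_cancel₀ hx, ← h]

lemma brace_inv (x : K) : brace x⁻¹ = -brace x := by simp [brace]

lemma brace_sq {x : K} (hx : x ≠ 0) : brace (x ^ 2) = brace x * (x + x⁻¹) := by
  simp only [brace]
  field_simp
  ring

lemma brace_pow_four {x : K} (hx : x ≠ 0) :
    brace (x ^ 4) = brace (x ^ 2) * (x ^ 2 + (x ^ 2)⁻¹) := by
  rw [← brace_sq (pow_ne_zero 2 hx), ← pow_mul]

lemma brace_mul_add_brace_div {x y : K} (hx : x ≠ 0) (hy : y ≠ 0) :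
    brace (x * y) + brace (x / y) = brace x * (y + y⁻¹) := by
  simp only [brace]
  field_simp
  ring

lemma brace_mul_mul_brace_div {x y : K} (hx : x ≠ 0) (hy : y ≠ 0) :
    brace (x * y) * brace (x / y) = x ^ 2 + (x ^ 2)⁻¹ - (y ^ 2 + (y ^ 2)⁻¹) := by
  simp only [brace]
  field_simp
  ring

lemma brace_mul_mul_brace_mul {x y z : K} (hx : x ≠ 0) (hy : y ≠ 0) (hz : z ≠ 0) :
    brace (x * y) * brace (y * z) = brace y * brace (x * y * z) + brace x * brace z := by
  simp only [brace]
  field_simp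
  ring

lemma quantumInt_eq_brace_div (q : K) (n : ℤ) : quantumInt q n = brace (q ^ n) / brace q := by
  simp only [quantumInt, brace, zpow_neg]

lemma quantumInt_inv (q : K) (n : ℤ) : quantumInt q⁻¹ n = quantumInt q n := by
  simp only [quantumInt_eq_brace_div, inv_zpow, brace_inv, neg_div_neg_eq]

lemma pow_mul_quantumInt_succ {q : K} (hq : q ≠ 0) (hq2 : q ^ 2 ≠ 1) (n : ℕ) :
    q ^ n * quantumInt q (n + 1) = ∑ i ∈ range (n + 1), (q ^ 2) ^ i := by
  have hq2_sub : q ^ 2 - 1 ≠ 0 := sub_ne_zero.2 hq2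
  rw [geom_sum_eq hq2, quantumInt, zpow_neg, zpow_add_one₀ hq, zpow_natCast]
  field_simp
  ring

lemma sq_sub_zpow_two_mul {q a : K} (hq : q ≠ 0) (ha : a ≠ 0) (l : ℤ) :
    a ^ 2 - q ^ (2 * l) = a * q ^ l * brace (a * q ^ (-l)) := by
  simp only [brace, two_mul, zpow_add₀ hq, zpow_neg]
  field_simp

lemma zpow_two_mul_sub_zpow_two_mul {q : K} (hq : q ≠ 0) (k l : ℤ) :
    q ^ (2 * k) - q ^ (2 * l) = q ^ (k + l) * brace (q ^ (k - l)) := by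
  simp only [brace, two_mul, zpow_add₀ hq, zpow_sub₀ hq]
  field_simp

lemma prod_zpow_eq_zpow_sum {ι : Type*} {q : K} (hq : q ≠ 0) (s : Finset ι) (f : ι → ℤ) :
    ∏ i ∈ s, q ^ f i = q ^ ∑ i ∈ s, f i := by
  classical
  induction s using Finset.induction_on with
  | empty => simp
  | insert i s hi ih => rw [prod_insert hi, sum_insert hi, zpow_add₀ hq, ih]

lemma eval_sq_basis {q a : K} (hq : q ≠ 0) (ha : a ≠ 0) (s : Finset ℤ) (k : ℤ) :
    (Lagrange.basis s (fun l => q ^ (2 * l)) k).eval (a ^ 2) =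
      (a * q ^ (-k)) ^ #(s.erase k) *
        ∏ l ∈ s.erase k, brace (a * q ^ (-l)) / brace (q ^ (k - l)) := by
  rw [← prod_const, ← prod_mul_distrib, Lagrange.basis, eval_prod]
  refine prod_congr rfl fun l _ => ?_
  simp only [Lagrange.basisDivisor, eval_mul, eval_sub, eval_X, eval_C,
    sq_sub_zpow_two_mul hq ha, zpow_two_mul_sub_zpow_two_mul hq, zpow_add₀ hq, zpow_neg]
  have hql : q ^ l ≠ 0 := zpow_ne_zero l hq
  have hqk : q ^ k ≠ 0 := zpow_ne_zero k hq
  field_simp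

lemma nodalWeight_zpow_two_mul {q : K} (hq : q ≠ 0) (s : Finset ℤ) (k : ℤ) :
    Lagrange.nodalWeight s (fun l => q ^ (2 * l)) k =
      (q ^ ∑ l ∈ s.erase k, (k + l))⁻¹ * ∏ l ∈ s.erase k, (brace (q ^ (k - l)))⁻¹ := by
  simp only [Lagrange.nodalWeight, zpow_two_mul_sub_zpow_two_mul hq, mul_inv, prod_mul_distrib,
    prod_inv_distrib, prod_zpow_eq_zpow_sum hq]

end Brace

section Nodes

open Finset

variable {K : Type*} [Field K] {q : K}

/-- The indices `k` of the interpolation nodes `q ^ (2 * k)`, which are the zeros, in the variable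
`A ^ 2`, of the prefactor of the differential expansion. -/
def nodeIndices : Finset ℤ := {1, 2, -1, -2}

lemma neg_mem_nodeIndices {k : ℤ} : -k ∈ nodeIndices ↔ k ∈ nodeIndices := by
  simp only [nodeIndices, mem_insert, mem_singleton]
  lia

lemma prod_nodeIndices_erase_one (f : ℤ → K) :
    ∏ l ∈ nodeIndices.erase 1, f l = f 2 * f (-1) * f (-2) := by
  simp [nodeIndices, mul_assoc]

lemma prod_nodeIndices_erase_two (f : ℤ → K) :
    ∏ l ∈ nodeIndices.erase 2, f l = f 1 * f (-1) * f (-2) := by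
  simp [nodeIndices, erase_insert_of_ne, mul_assoc]

lemma prod_nodeIndices_erase_neg_one (f : ℤ → K) :
    ∏ l ∈ nodeIndices.erase (-1), f l = f 1 * f 2 * f (-2) := by
  simp [nodeIndices, erase_insert_of_ne, mul_assoc]

lemma prod_nodeIndices_erase_neg_two (f : ℤ → K) :
    ∏ l ∈ nodeIndices.erase (-2), f l = f 1 * f 2 * f (-1) := by
  simp [nodeIndices, erase_insert_of_ne, mul_assoc]

lemma sum_nodeIndices (f : ℤ → K) : ∑ k ∈ nodeIndices, f k = f 1 + f 2 + f (-1) + f (-2) := by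
  simp [nodeIndices, add_assoc]

lemma sum_nodeIndices_erase_add {k : ℤ} (hk : k ∈ nodeIndices) :
    ∑ l ∈ nodeIndices.erase k, (k + l) = 2 * k := by
  revert k
  decide

lemma zpow_ne_one_of_dvd (hq6 : q ^ 6 ≠ 1) (hq8 : q ^ 8 ≠ 1) {d : ℤ} (hd : d ∣ 6 ∨ d ∣ 8) :
    q ^ d ≠ 1 := by
  intro h
  rcases hd with ⟨c, hc⟩ | ⟨c, hc⟩
  · exact hq6 (by rw [← zpow_natCast, Nat.cast_ofNat, hc, zpow_mul, h, one_zpow])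
  · exact hq8 (by rw [← zpow_natCast, Nat.cast_ofNat, hc, zpow_mul, h, one_zpow])

lemma injOn_zpow_two_mul_nodeIndices (hq : q ≠ 0) (hq6 : q ^ 6 ≠ 1) (hq8 : q ^ 8 ≠ 1) :
    Set.InjOn (fun k : ℤ => q ^ (2 * k)) nodeIndices := by
  have hdvd : ∀ k ∈ nodeIndices, ∀ l ∈ nodeIndices, k ≠ l →
      2 * (k - l) ∣ 6 ∨ 2 * (k - l) ∣ 8 := by decide
  intro k hk l hl h
  by_contra hne
  refine zpow_ne_one_of_dvd hq6 hq8 (hdvd k hk l hl hne) ?_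
  rw [mul_sub, zpow_sub₀ hq, div_eq_one_iff_eq (zpow_ne_zero _ hq)]
  exact h

lemma brace_pow_ne_zero (hq : q ≠ 0) (hq6 : q ^ 6 ≠ 1) (hq8 : q ^ 8 ≠ 1) :
    brace q ≠ 0 ∧ brace (q ^ 2) ≠ 0 ∧ brace (q ^ 3) ≠ 0 ∧ brace (q ^ 4) ≠ 0 := by
  have hpow {n : ℕ} (hn : (2 * n : ℤ) ∣ 6 ∨ (2 * n : ℤ) ∣ 8) : brace (q ^ n) ≠ 0 := by
    refine brace_ne_zero (pow_ne_zero n hq) ?_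
    rw [← pow_mul, mul_comm]
    exact_mod_cast zpow_ne_one_of_dvd hq6 hq8 hn
  exact ⟨by simpa using hpow (n := 1) (by decide), hpow (by decide), hpow (by decide),
    hpow (by decide)⟩

lemma sum_zpow_mul_prod_inv_brace (hq : q ≠ 0) (hq6 : q ^ 6 ≠ 1) (hq8 : q ^ 8 ≠ 1) {y : K}
    (hy : y ≠ 0) :
    ∑ k ∈ nodeIndices, y ^ (2 * k) * ∏ l ∈ nodeIndices.erase k, (brace (q ^ (k - l)))⁻¹ =
      brace (y ^ 2) * brace (y * q) * brace (y / q) /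
        (brace q * brace (q ^ 3) * brace (q ^ 4)) := by
  obtain ⟨h1, h2, h3, h4⟩ := brace_pow_ne_zero hq hq6 hq8
  have hsum :
      ∑ k ∈ nodeIndices, y ^ (2 * k) * ∏ l ∈ nodeIndices.erase k, (brace (q ^ (k - l)))⁻¹ =
        brace ((y ^ 2) ^ 2) / (brace q * brace (q ^ 3) * brace (q ^ 4)) -
          brace (y ^ 2) / (brace q * brace (q ^ 2) * brace (q ^ 3)) := by
    rw [sum_nodeIndices, prod_nodeIndices_erase_one, prod_nodeIndices_erase_two,
      prod_nodeIndices_erase_neg_one, prod_nodeIndices_erase_neg_two]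
    simp only [mul_neg, mul_one, zpow_neg, Int.reduceMul, Int.reduceSub, zpow_ofNat, pow_one,
      brace_inv]
    field_simp
    simp only [brace]
    field_simp
    ring
  rw [hsum, brace_sq (pow_ne_zero 2 hy), mul_assoc (brace (y ^ 2)), brace_mul_mul_brace_div hy hq]
  field_simp
  rw [brace_pow_four hq]
  field_simp

theorem nodalMoment_nodeIndices (hq : q ≠ 0) (hq6 : q ^ 6 ≠ 1) (hq8 : q ^ 8 ≠ 1) (j : ℕ) :
    nodalMoment nodeIndices (fun k => q ^ (2 * k)) (3 + j) =
      quantumInt q (2 * j + 4) * quantumInt q (j + 3) * quantumInt q (j + 1) /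
        (quantumInt q 3 * quantumInt q 4) := by
  have hmoment : nodalMoment nodeIndices (fun k => q ^ (2 * k)) (3 + j) =
      ∑ k ∈ nodeIndices, (q ^ ((j : ℤ) + 2)) ^ (2 * k) *
        ∏ l ∈ nodeIndices.erase k, (brace (q ^ (k - l)))⁻¹ := by
    refine sum_congr rfl fun k hk => ?_
    have hexp : (q ^ (2 * k))⁻¹ * (q ^ (2 * k)) ^ (3 + j) = (q ^ ((j : ℤ) + 2)) ^ (2 * k) := by
      simp only [← zpow_natCast, ← zpow_mul, ← zpow_neg, ← zpow_add₀ hq]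
      congr 1
      push_cast
      ring
    rw [nodalWeight_zpow_two_mul hq, sum_nodeIndices_erase_add hk, mul_right_comm, hexp]
  have hy_sq : (q ^ ((j : ℤ) + 2)) ^ 2 = q ^ (2 * (j : ℤ) + 4) := by
    rw [← zpow_natCast, ← zpow_mul]
    congr 1
    push_cast
    ring
  have hy_mul : q ^ ((j : ℤ) + 2) * q = q ^ ((j : ℤ) + 3) := by
    rw [← zpow_add_one₀ hq, add_assoc, two_add_one_eq_three]
  have hy_div : q ^ ((j : ℤ) + 2) / q = q ^ ((j : ℤ) + 1) := by
    rw [← one_add_one_eq_two, ← add_assoc, zpow_add_one₀ hq, mul_div_cancel_right₀ _ hq]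
  obtain ⟨h1, _, h3, h4⟩ := brace_pow_ne_zero hq hq6 hq8
  rw [hmoment, sum_zpow_mul_prod_inv_brace hq hq6 hq8 (zpow_ne_zero _ hq), hy_sq, hy_mul, hy_div]
  simp only [quantumInt_eq_brace_div, zpow_ofNat]
  field_simp

end Nodes

section SchurFunctions

open Finset

variable {K : Type*} [Field K] {q A : K}

/-- The normalized Schur function `S*_{[4]}` in an arbitrary field. -/
def schur4 (q A : K) : K :=
  brace (A * q) * brace (A * q ^ 2) * brace (A * q ^ 3) /
    (brace (q ^ 2) * brace (q ^ 3) * brace (q ^ 4))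

/-- The normalized Schur function `S*_{[3,1]}` in an arbitrary field. -/
def schur31 (q A : K) : K :=
  brace (A * q) * brace (A * q ^ 2) * brace (A * q⁻¹) / (brace q * brace (q ^ 2) * brace (q ^ 4))

/-- The normalized Schur function `S*_{[2,2]}` in an arbitrary field. -/
def schur22 (q A : K) : K :=
  brace A * brace (A * q) * brace (A * q⁻¹) / (brace (q ^ 2) * brace (q ^ 2) * brace (q ^ 3))

/-- The normalized Schur function `S*_{[2,1,1]}` in an arbitrary field. -/
def schur211 (q A : K) : K :=
  brace (A * q) * brace (A * q⁻¹) * brace (A * q⁻¹ ^ 2) /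
    (brace q * brace (q ^ 2) * brace (q ^ 4))

/-- The normalized Schur function `S*_{[1,1,1,1]}` in an arbitrary field. -/
def schur1111 (q A : K) : K :=
  brace (A * q⁻¹) * brace (A * q⁻¹ ^ 2) * brace (A * q⁻¹ ^ 3) /
    (brace (q ^ 2) * brace (q ^ 3) * brace (q ^ 4))

/-- The value at `A ^ 2` of the Lagrange basis polynomial of the node `q ^ (2 * k)`, normalized by
the factor `(A * q ^ (-k)) ^ 3` so as to be a product of ratios of brackets; these are the
coefficients of `q ^ (k * W)` in the character expansion. -/
def basisCoeff (q A : K) (k : ℤ) : K :=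
  ∏ l ∈ nodeIndices.erase k, brace (A * q ^ (-l)) / brace (q ^ (k - l))

lemma schur4_inv (q A : K) : schur4 q⁻¹ A = -schur1111 q A := by
  simp only [schur4, schur1111, inv_pow, brace_inv]
  ring

lemma schur31_inv (q A : K) : schur31 q⁻¹ A = -schur211 q A := by
  simp only [schur31, schur211, inv_pow, inv_inv, brace_inv]
  ring

lemma schur22_eq (hq : q ≠ 0) (hA : A ≠ 0) (hq6 : q ^ 6 ≠ 1) (hq8 : q ^ 8 ≠ 1) :
    schur22 q A = (schur31 q A + schur211 q A) / quantumInt q 3 := by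
  obtain ⟨h1, h2, h3, h4⟩ := brace_pow_ne_zero hq hq6 hq8
  have hsum : brace (A * q ^ 2) + brace (A / q ^ 2) = brace A * (q ^ 2 + (q ^ 2)⁻¹) :=
    brace_mul_add_brace_div hA (pow_ne_zero 2 hq)
  simp only [schur22, schur31, schur211, quantumInt_eq_brace_div, inv_pow, zpow_ofNat]
  field_simp
  linear_combination
    brace (A * q) * brace (A / q) * (brace A * brace_pow_four hq - brace (q ^ 2) * hsum)

lemma basisCoeff_inv (q A : K) (k : ℤ) : basisCoeff q⁻¹ A k = basisCoeff q A (-k) := by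
  refine prod_equiv (Equiv.neg ℤ) (fun l => ?_) fun l _ => ?_
  · simp only [mem_erase, Equiv.neg_apply, neg_mem_nodeIndices, ne_eq, neg_inj]
  · simp only [Equiv.neg_apply, inv_zpow', neg_neg, neg_sub, sub_neg_eq_add, neg_add_eq_sub]

lemma basisCoeff_one (hq : q ≠ 0) (hA : A ≠ 0) (hq6 : q ^ 6 ≠ 1) (hq8 : q ^ 8 ≠ 1) :
    basisCoeff q A 1 = schur4 q A - quantumInt q 5 / quantumInt q 3 * schur31 q A := by
  obtain ⟨h1, h2, h3, h4⟩ := brace_pow_ne_zero hq hq6 hq8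
  have three_term : brace (q ^ 5) * brace (A / q) =
      brace q * brace (A * q ^ 3) + brace (q ^ 4) * brace (A / q ^ 2) := by
    convert brace_mul_mul_brace_mul (pow_ne_zero 4 hq) hq
      (div_ne_zero hA (pow_ne_zero 2 hq)) using 3 <;> field_simp
  rw [basisCoeff, prod_nodeIndices_erase_one]
  simp only [quantumInt_eq_brace_div, schur31, schur4, neg_neg, zpow_neg, Int.reduceSub, zpow_ofNat,
    pow_one, brace_inv]
  field_simp
  linear_combination brace (A * q) * brace (A * q ^ 2) * three_term

lemma basisCoeff_two (hq : q ≠ 0) (hq6 : q ^ 6 ≠ 1) (hq8 : q ^ 8 ≠ 1) :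
    basisCoeff q A 2 = quantumInt q 2 / quantumInt q 3 * schur31 q A := by
  obtain ⟨h1, h2, h3, h4⟩ := brace_pow_ne_zero hq hq6 hq8
  rw [basisCoeff, prod_nodeIndices_erase_two]
  simp only [quantumInt_eq_brace_div, schur31, neg_neg, zpow_neg, Int.reduceSub, zpow_ofNat,
    pow_one]
  field_simp

lemma basisCoeff_neg_one (hq : q ≠ 0) (hA : A ≠ 0) (hq6 : q ^ 6 ≠ 1) (hq8 : q ^ 8 ≠ 1) :
    basisCoeff q A (-1) = quantumInt q 5 / quantumInt q 3 * schur211 q A - schur1111 q A := by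
  rw [← basisCoeff_inv, basisCoeff_one (inv_ne_zero hq) hA (by simpa) (by simpa), schur31_inv,
    schur4_inv, quantumInt_inv, quantumInt_inv]
  ring

lemma basisCoeff_neg_two (hq : q ≠ 0) (hq6 : q ^ 6 ≠ 1) (hq8 : q ^ 8 ≠ 1) :
    basisCoeff q A (-2) = -(quantumInt q 2 / quantumInt q 3 * schur211 q A) := by
  rw [← basisCoeff_inv, basisCoeff_two (inv_ne_zero hq) (by simpa) (by simpa), schur31_inv,
    quantumInt_inv, quantumInt_inv, mul_neg]

end SchurFunctions

section Expansions

open Finset Polynomial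

variable {K : Type*} [Field K] {q A : K}

/-- The character expansion of the HOMFLY-PT polynomial of a 4-strand braid of writhe `W`, with
`a_{[4]} = q ^ W` and `a_{[1,1,1,1]} = -q ^ (-W)`. -/
def characterExpansion (q A : K) (W : ℤ) (a31 a22 a211 : K) : K :=
  A ^ (-W) * (q ^ W * schur4 q A + a31 * schur31 q A + a22 * schur22 q A + a211 * schur211 q A -
    q ^ (-W) * schur1111 q A)

/-- The cofactor `F_m` of the differential expansion in an arbitrary field. -/
def differentialCofactor (q A : K) (m : ℕ) : K :=
  -∑ j ∈ range (m + 1),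
    (quantumInt q (2 * j + 4) * quantumInt q (j + 3) * quantumInt q (j + 1) /
      (quantumInt q 3 * quantumInt q 4)) * A ^ (-(2 * (j : ℤ)) - 8)

theorem characterExpansion_eq_sum_basisCoeff (hq : q ≠ 0) (hA : A ≠ 0) (hq6 : q ^ 6 ≠ 1)
    (hq8 : q ^ 8 ≠ 1) (W : ℤ) (t : K) :
    characterExpansion q A W
        ((quantumInt q 2 * q ^ (2 * W) - quantumInt q 5 * q ^ W - t) / quantumInt q 3) t
        ((quantumInt q 5 * q ^ (-W) - quantumInt q 2 * q ^ (-2 * W) - t) / quantumInt q 3) =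
      A ^ (-W) * ∑ k ∈ nodeIndices, q ^ (k * W) * basisCoeff q A k := by
  rw [sum_nodeIndices, basisCoeff_one hq hA hq6 hq8, basisCoeff_two hq hq6 hq8,
    basisCoeff_neg_one hq hA hq6 hq8, basisCoeff_neg_two hq hq6 hq8, characterExpansion,
    schur22_eq hq hA hq6 hq8, one_mul, neg_one_mul]
  ring

theorem sum_basisCoeff_eq_eval_interpolate (hq : q ≠ 0) (hA : A ≠ 0) (m : ℕ) :
    A ^ (-(2 * (m : ℤ) + 5)) * ∑ k ∈ nodeIndices, q ^ (k * (2 * (m : ℤ) + 5)) * basisCoeff q A k =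
      (Lagrange.interpolate nodeIndices (fun k => q ^ (2 * k))
        ((fun k => q ^ (2 * k)) ^ (3 + (m + 1)))).eval (A ^ 2) / (A ^ 2) ^ (3 + (m + 1)) := by
  simp only [Lagrange.interpolate_apply, eval_finsetSum, mul_sum, sum_div]
  refine sum_congr rfl fun k hk => ?_
  have hcard : #(nodeIndices.erase k) = 3 := card_erase_of_mem hk
  have hA_pow : A ^ (-(2 * (m : ℤ) + 5)) * (A ^ 2) ^ (3 + (m + 1)) = A ^ 3 := by
    simp only [← zpow_natCast, ← zpow_mul, ← zpow_add₀ hA]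
    congr 1
    push_cast
    ring
  have hq_pow : q ^ (k * (2 * (m : ℤ) + 5)) = (q ^ (2 * k)) ^ (3 + (m + 1)) * (q ^ (-k)) ^ 3 := by
    simp only [← zpow_natCast, ← zpow_mul, ← zpow_add₀ hq]
    congr 1
    push_cast
    ring
  rw [eval_mul, eval_C, eval_sq_basis hq hA, ← basisCoeff, hcard, Pi.pow_apply,
    eq_div_iff (pow_ne_zero _ (pow_ne_zero _ hA)), hq_pow, mul_pow, ← hA_pow]
  ring

theorem sum_basisCoeff_eq_differentialExpansion (hq : q ≠ 0) (hA : A ≠ 0) (hq6 : q ^ 6 ≠ 1)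
    (hq8 : q ^ 8 ≠ 1) (m : ℕ) :
    A ^ (-(2 * (m : ℤ) + 5)) * ∑ k ∈ nodeIndices, q ^ (k * (2 * (m : ℤ) + 5)) * basisCoeff q A k =
      1 + (A ^ 2 - q ^ 2) * (A ^ 2 - q ^ 4) * (A ^ 2 - q ^ (-2 : ℤ)) * (A ^ 2 - q ^ (-4 : ℤ)) *
        differentialCofactor q A m := by
  have hnodal : (Lagrange.nodal nodeIndices fun k : ℤ => q ^ (2 * k)).eval (A ^ 2) =
      (A ^ 2 - q ^ 2) * (A ^ 2 - q ^ 4) * (A ^ 2 - q ^ (-2 : ℤ)) * (A ^ 2 - q ^ (-4 : ℤ)) := by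
    simp [Lagrange.eval_nodal, nodeIndices, mul_assoc, zpow_ofNat]
  have hcofactor : ∑ j ∈ range (m + 1),
      nodalMoment nodeIndices (fun k => q ^ (2 * k)) (3 + j) / (A ^ 2) ^ (3 + j + 1) =
        -differentialCofactor q A m := by
    rw [differentialCofactor, neg_neg]
    refine sum_congr rfl fun j _ => ?_
    rw [nodalMoment_nodeIndices hq hq6 hq8, div_eq_mul_inv]
    congr 1
    rw [← pow_mul, ← zpow_natCast, ← zpow_neg]
    congr 1
    push_cast
    ring
  rw [sum_basisCoeff_eq_eval_interpolate hq hA,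
    eval_interpolate_pow_div_pow (injOn_zpow_two_mul_nodeIndices hq hq6 hq8) (by decide)
      (pow_ne_zero 2 hA), hnodal, hcofactor, mul_neg, sub_neg_eq_add]

lemma mul_quantumInt_two (hq : q ≠ 0) (hq2 : q ^ 2 ≠ 1) : q * quantumInt q 2 = 1 + q ^ 2 := by
  simpa [sum_range_succ] using pow_mul_quantumInt_succ hq hq2 1

lemma sq_mul_quantumInt_three (hq : q ≠ 0) (hq2 : q ^ 2 ≠ 1) :
    q ^ 2 * quantumInt q 3 = (1 - q + q ^ 2) * (1 + q + q ^ 2) := by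
  calc q ^ 2 * quantumInt q 3 = ∑ i ∈ range 3, (q ^ 2) ^ i := pow_mul_quantumInt_succ hq hq2 2
    _ = (1 - q + q ^ 2) * (1 + q + q ^ 2) := by
      simp only [sum_range_succ, range_zero, sum_empty]
      ring

lemma pow_four_mul_quantumInt_five (hq : q ≠ 0) (hq2 : q ^ 2 ≠ 1) :
    q ^ 4 * quantumInt q 5 = 1 + q ^ 2 + q ^ 4 + q ^ 6 + q ^ 8 := by
  simpa [sum_range_succ, ← pow_mul] using pow_mul_quantumInt_succ hq hq2 4

lemma coeff31_eq (hq : q ≠ 0) (hq2 : q ^ 2 ≠ 1) (m : ℕ) (t : K) :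
    -(t * q ^ 2 + q ^ (2 * m + 3) * (1 + q ^ 2 + q ^ 4 + q ^ 6 + q ^ 8) -
          q ^ (11 + 4 * m) * (1 + q ^ 2)) / ((1 - q + q ^ 2) * (1 + q + q ^ 2)) =
      (quantumInt q 2 * q ^ (2 * (2 * (m : ℤ) + 5)) - quantumInt q 5 * q ^ (2 * (m : ℤ) + 5) - t) /
        quantumInt q 3 := by
  rw [← pow_four_mul_quantumInt_five hq hq2, ← mul_quantumInt_two hq hq2,
    ← sq_mul_quantumInt_three hq hq2, ← mul_div_mul_left _ (quantumInt q 3) (pow_ne_zero 2 hq)]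
  norm_cast
  ring

lemma coeff211_eq (hq : q ≠ 0) (hq2 : q ^ 2 ≠ 1) (m : ℕ) (t : K) :
    -(1 + q ^ 2 - q ^ (2 + 2 * m) * (1 + q ^ 2 + q ^ 4 + q ^ 6 + q ^ 8) + t * q ^ (11 + 4 * m)) /
        (q ^ (9 + 4 * m) * (1 - q + q ^ 2) * (1 + q + q ^ 2)) =
      (quantumInt q 5 * q ^ (-(2 * (m : ℤ) + 5)) -
        quantumInt q 2 * q ^ (-2 * (2 * (m : ℤ) + 5)) - t) / quantumInt q 3 := by
  have hW : q ^ (-(2 * (m : ℤ) + 5)) = (q ^ (2 * m + 5))⁻¹ := by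
    rw [zpow_neg]
    norm_cast
  have h2W : q ^ (-2 * (2 * (m : ℤ) + 5)) = (q ^ (4 * m + 10))⁻¹ := by
    rw [neg_mul, zpow_neg, ← zpow_natCast]
    congr 2
    push_cast
    ring
  rw [← pow_four_mul_quantumInt_five hq hq2, ← mul_quantumInt_two hq hq2, mul_assoc (q ^ _),
    ← sq_mul_quantumInt_three hq hq2,
    ← mul_div_mul_left _ (quantumInt q 3) (pow_ne_zero (11 + 4 * m) hq), hW, h2W]
  congr 1
  · field_simp
    ring
  · ring

theorem stmt9_general (hq : q ≠ 0) (hA : A ≠ 0) (hq6 : q ^ 6 ≠ 1) (hq8 : q ^ 8 ≠ 1) (m : ℕ)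
    (t a31 a211 : K)
    (h31 : a31 = -(t * q ^ 2 + q ^ (2 * m + 3) * (1 + q ^ 2 + q ^ 4 + q ^ 6 + q ^ 8) -
        q ^ (11 + 4 * m) * (1 + q ^ 2)) / ((1 - q + q ^ 2) * (1 + q + q ^ 2)))
    (h211 : a211 = -(1 + q ^ 2 - q ^ (2 + 2 * m) * (1 + q ^ 2 + q ^ 4 + q ^ 6 + q ^ 8) +
        t * q ^ (11 + 4 * m)) / (q ^ (9 + 4 * m) * (1 - q + q ^ 2) * (1 + q + q ^ 2))) :
    characterExpansion q A (2 * m + 5) a31 t a211 =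
      1 + (A ^ 2 - q ^ 2) * (A ^ 2 - q ^ 4) * (A ^ 2 - q ^ (-2 : ℤ)) * (A ^ 2 - q ^ (-4 : ℤ)) *
        differentialCofactor q A m := by
  have hq2 : q ^ 2 ≠ 1 := by exact_mod_cast zpow_ne_one_of_dvd hq6 hq8 (d := 2) (by decide)
  rw [h31, h211, coeff31_eq hq hq2, coeff211_eq hq hq2,
    characterExpansion_eq_sum_basisCoeff hq hA hq6 hq8,
    sum_basisCoeff_eq_differentialExpansion hq hA hq6 hq8]

end Expansions

lemma qv_ne_zero : qv ≠ 0 := (map_ne_zero RatFunc.C).2 RatFunc.X_ne_zero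

lemma qv_pow_ne_one {n : ℕ} (hn : n ≠ 0) : qv ^ n ≠ 1 := by
  intro h
  have hX : (RatFunc.X : RatFunc ℚ) ^ n = 1 := RatFunc.C_injective (by simpa [qv] using h)
  refine RatFunc.transcendental_X (K := ℚ)
    ⟨Polynomial.X ^ n - 1, Polynomial.X_pow_sub_C_ne_zero hn.bot_lt 1, ?_⟩
  simp [hX]

/-- The character expansion with coefficients `a_{[4]} = q^W`, `a_{[1,1,1,1]} = −q^{−W}`,
the stated `a_{[3,1]}`, `a_{[2,1,1]}` and free coefficient `t = a_{[2,2]}`, `W = 2m+5`,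
equals the differential expansion `1 + P·F_m`; in particular it is independent of `t`. -/
theorem stmt9 (m : ℕ) (t a31 a211 : Mf)
    (h31 : a31 = -(t * qv ^ 2 + qv ^ (2 * m + 3) * (1 + qv ^ 2 + qv ^ 4 + qv ^ 6 + qv ^ 8)
        - qv ^ (11 + 4 * m) * (1 + qv ^ 2)) /
      ((1 - qv + qv ^ 2) * (1 + qv + qv ^ 2)))
    (h211 : a211 = -(1 + qv ^ 2 - qv ^ (2 + 2 * m) * (1 + qv ^ 2 + qv ^ 4 + qv ^ 6 + qv ^ 8)
        + t * qv ^ (11 + 4 * m)) /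
      (qv ^ (9 + 4 * m) * (1 - qv + qv ^ 2) * (1 + qv + qv ^ 2))) :
    Av ^ (-(2 * (m : ℤ) + 5)) *
      (qv ^ (2 * (m : ℤ) + 5) * S4 + a31 * S31 + t * S22 + a211 * S211 -
        qv ^ (-(2 * (m : ℤ) + 5)) * S1111) =
    1 + (Av ^ 2 - qv ^ 2) * (Av ^ 2 - qv ^ 4) * (Av ^ 2 - qv ^ (-2 : ℤ)) *
        (Av ^ 2 - qv ^ (-4 : ℤ)) * FmM m := by
  exact stmt9_general qv_ne_zero RatFunc.X_ne_zero (qv_pow_ne_one (by decide))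
    (qv_pow_ne_one (by decide)) m t a31 a211 h31 h211
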